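/- There exists an absolute constant C > 0 such that for every ν ∈ (0,1] and every C² function h : ℝ → ℝ that is 2π-periodic, sup_{x ∈ ℝ} |h'(x)| ≤ C max{ 1, ν^{−1/6} E(h)^{1/3} }, where E(h) = ∫_{−π}^{π} ( (ν/2) h''(x)² + ¼ (h'(x)² − 1)² ) dx. -/

import Mathlib

open Real MeasureTheory Set

noncomputable section

/-- The 1D slope-selection energy `E(h) = ∫_{−π}^{π} ((ν/2)h''² + ¼(h'²−1)²) dx`. -/
noncomputable def energy1D (ν : ℝ) (h : ℝ → ℝ) : ℝ :=
  ∫ x in Icc (-Real.pi) Real.pi,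
    ((ν / 2) * (deriv (deriv h) x) ^ 2 + (1 / 4) * ((deriv h x) ^ 2 - 1) ^ 2)

theorem aux_ineq {s a b : ℝ} :
    s * |a * b| ≤ 2 * (s ^ 2 / 2 * b ^ 2 + 1 / 4 * a ^ 2) := by
  rw [abs_mul, ← sq_abs a, ← sq_abs b]
  nlinarith [sq_nonneg (s * |b| - |a| / 2), sq_nonneg (|a|), abs_nonneg a, abs_nonneg b]

theorem aux_main {ν : ℝ} (hν : 0 < ν) {h : ℝ → ℝ} (hh : ContDiff ℝ 2 h) {x y : ℝ}
    (hx : x ∈ Icc (-Real.pi) Real.pi) (hy : y ∈ Icc (-Real.pi) Real.pi) (h0 : deriv h y = 0) :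
    √ν * |deriv h x ^ 3 / 3 - deriv h x| ≤ 2 * energy1D ν h := by
  have hu : ContDiff ℝ 1 (deriv h) := by
    have : ContDiff ℝ (1 + 1) h := by simpa [one_add_one_eq_two] using hh
    exact (contDiff_succ_iff_deriv.1 this).2.2
  have hd : Differentiable ℝ (deriv h) := hu.differentiable (by simp)
  have hc : Continuous (deriv h) := hu.continuous
  have hc' : Continuous (deriv (deriv h)) := hu.continuous_deriv (by simp)
  have key : ∫ t in y..x, (deriv h t ^ 2 - 1) * deriv (deriv h) t
      = deriv h x ^ 3 / 3 - deriv h x := by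
    rw [intervalIntegral.integral_eq_sub_of_hasDerivAt
      (f := fun t => deriv h t ^ 3 / 3 - deriv h t)]
    · simp [h0]
    · intro t _
      have h1 := (hd t).hasDerivAt
      have h2 := ((h1.fun_pow 3).div_const 3).fun_sub h1
      refine h2.congr_deriv ?_
      norm_num
      ring
    · exact Continuous.intervalIntegrable (by fun_prop) _ _
  have hsub : Set.uIoc y x ⊆ Icc (-Real.pi) Real.pi :=
    Set.uIoc_subset_uIcc.trans (Set.uIcc_subset_Icc hy hx)
  rw [← key, ← Real.norm_eq_abs]
  have hF : Continuous fun t => ‖(deriv h t ^ 2 - 1) * deriv (deriv h) t‖ := by fun_prop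
  calc √ν * ‖∫ t in y..x, (deriv h t ^ 2 - 1) * deriv (deriv h) t‖
      ≤ √ν * ∫ t in Set.uIoc y x, ‖(deriv h t ^ 2 - 1) * deriv (deriv h) t‖ := by
        gcongr
        exact intervalIntegral.norm_integral_le_integral_norm_uIoc
    _ ≤ √ν * ∫ t in Icc (-Real.pi) Real.pi, ‖(deriv h t ^ 2 - 1) * deriv (deriv h) t‖ := by
        refine mul_le_mul_of_nonneg_left ?_ (Real.sqrt_nonneg _)
        exact setIntegral_mono_set hF.continuousOn.integrableOn_Icc
          (Filter.Eventually.of_forall fun t => norm_nonneg _) hsub.eventuallyLE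
    _ = ∫ t in Icc (-Real.pi) Real.pi, √ν * ‖(deriv h t ^ 2 - 1) * deriv (deriv h) t‖ := by
        rw [integral_const_mul]
    _ ≤ ∫ t in Icc (-Real.pi) Real.pi,
        2 * ((ν / 2) * (deriv (deriv h) t) ^ 2 + (1 / 4) * ((deriv h t) ^ 2 - 1) ^ 2) := by
        apply setIntegral_mono
        · exact (Continuous.continuousOn (by fun_prop)).integrableOn_Icc
        · exact (Continuous.continuousOn (by fun_prop)).integrableOn_Icc
        · intro t
          have := aux_ineq (s := √ν) (a := deriv h t ^ 2 - 1) (b := deriv (deriv h) t)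
          rw [Real.sq_sqrt hν.le] at this
          exact this
    _ = 2 * energy1D ν h := by
        rw [integral_const_mul, energy1D]

/-- Proposition 5.1, Eq. (5.1): there is an absolute constant `C > 0`
such that every `2π`-periodic `C²` function `h` satisfies
`‖h'‖_∞ ≤ C max{1, ν^{−1/6} E(h)^{1/3}}` for every `ν ∈ (0,1]`. -/
theorem stmt15 :
    ∃ C : ℝ, 0 < C ∧ ∀ ν : ℝ, ν ∈ Ioc (0 : ℝ) 1 → ∀ h : ℝ → ℝ,
      ContDiff ℝ 2 h → Function.Periodic h (2 * Real.pi) →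
      ∀ x : ℝ, |deriv h x| ≤
        C * max 1 (ν ^ (-(1 : ℝ) / 6) * energy1D ν h ^ ((1 : ℝ) / 3)) := by
  refine ⟨3, by norm_num, ?_⟩
  rintro ν ⟨hν, -⟩ h hh hp x
  have hpi := Real.pi_pos
  have hp' : Function.Periodic (deriv h) (2 * Real.pi) := by
    intro t
    rw [← deriv_comp_add_const]
    congr 1
    exact funext hp
  obtain ⟨x', hx', hxx⟩ := hp'.exists_mem_Ico (by positivity) x (-Real.pi)
  rw [hxx]
  obtain ⟨y, hy, h0⟩ := exists_deriv_eq_zero (f := h) (a := -Real.pi) (b := Real.pi)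
    (by linarith) hh.continuous.continuousOn (by
      rw [← hp (-Real.pi)]; congr 1; ring)
  have hm := aux_main hν hh (x := x') ⟨hx'.1, by linarith [hx'.2]⟩ (Ioo_subset_Icc_self hy) h0
  have hE : 0 ≤ energy1D ν h := by
    have : 0 ≤ √ν * |deriv h x' ^ 3 / 3 - deriv h x'| := by positivity
    linarith
  set u := deriv h x'
  set E := energy1D ν h
  rcases le_or_gt |u| 3 with h3 | h3
  · have := le_max_left 1 (ν ^ (-(1 : ℝ) / 6) * E ^ ((1 : ℝ) / 3))
    linarith
  refine le_trans ?_ (mul_le_mul_of_nonneg_left (le_max_right _ _) (by norm_num))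
  refine le_of_pow_le_pow_left₀ (n := 3) (by norm_num) (by positivity) ?_
  have e1 : (3 * (ν ^ (-(1 : ℝ) / 6) * E ^ ((1 : ℝ) / 3))) ^ 3 = 27 * ((√ν)⁻¹ * E) := by
    rw [mul_pow, mul_pow, ← Real.rpow_natCast (ν ^ _), ← Real.rpow_natCast (E ^ _),
      ← Real.rpow_mul hν.le, ← Real.rpow_mul hE, Real.sqrt_eq_rpow, ← Real.rpow_neg hν.le]
    norm_num
  rw [e1]
  have hs : 0 < √ν := Real.sqrt_pos.2 hν
  have e2 : 2 / 9 * |u| ^ 3 ≤ |u ^ 3 / 3 - u| := by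
    have : |u ^ 3 / 3| - |u| ≤ |u ^ 3 / 3 - u| := abs_sub_abs_le_abs_sub _ _
    rw [abs_div, abs_pow, abs_of_pos (by norm_num : (0 : ℝ) < 3)] at this
    have h9 : 9 ≤ |u| ^ 2 := by nlinarith
    nlinarith
  have e3 : √ν * (2 / 9 * |u| ^ 3) ≤ 2 * E := (mul_le_mul_of_nonneg_left e2 hs.le).trans hm
  rw [← mul_assoc, mul_comm (27 : ℝ), mul_assoc, inv_mul_eq_div, le_div_iff₀ hs]
  linarith
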